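/- arXiv:1507.00124 — 7 statements merged into one kernel-verified Lean document; each statement's English description precedes it below -/
import Mathlib

section
/- For every a ∈ ℝ the subspace m_a satisfies ⁅⁅m_a, m_a⁆, m_a⁆ ⊆ m_a, and if a² ≠ 1 then ⁅m_a, m_a⁆ = span_ℝ{iH, U + aT, i(T + aU)}. -/
open Matrix

/-- The matrix `H`. -/
def matH : Matrix (Fin 2) (Fin 2) ℂ := !![1, 0; 0, -1]

/-- The matrix `T`. -/
def matT : Matrix (Fin 2) (Fin 2) ℂ := !![0, 1; 1, 0]

/-- The matrix `U`. -/
def matU : Matrix (Fin 2) (Fin 2) ℂ := !![0, 1; -1, 0]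

/-- For `a ∈ ℝ`, the real span `m_a` of `{T + aU, i(U + aT), H}` inside `sl₂(ℂ)` viewed as a
real Lie algebra (of traceless complex 2×2 matrices with the commutator bracket). -/
noncomputable def mSub (a : ℝ) : Submodule ℝ (Matrix (Fin 2) (Fin 2) ℂ) :=
  Submodule.span ℝ {matT + (a : ℂ) • matU, Complex.I • (matU + (a : ℂ) • matT), matH}

/-!
Multiplication by `i` carries `m_a` onto `span_ℝ {iH, U + aT, i(T + aU)}`. The brackets of the three
generators of `m_a` are real multiples of the generators of this image, so `⁅m_a, m_a⁆ ⊆ i m_a`, and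
by complex bilinearity `⁅⁅m_a, m_a⁆, m_a⁆ ⊆ i² m_a = m_a`. The multiples are `2`, `2` and
`-2 (1 - a²)`; when `a² ≠ 1` all three are units, so `⁅m_a, m_a⁆` is the whole image.
-/

section LieSpan

variable {R L : Type*} [CommRing R] [LieRing L] [LieAlgebra R L]

theorem span_image2_lie_span {M : Type*} [AddCommGroup M] [Module R M] [LieRingModule L M]
    [LieModule R L M] (s : Set L) (t : Set M) :
    Submodule.span R (Set.image2 (fun x y => ⁅x, y⁆)
        (Submodule.span R s : Set L) (Submodule.span R t : Set M)) =
      Submodule.span R (Set.image2 (fun x y => ⁅x, y⁆) s t) := by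
  let bracket : L →ₗ[R] M →ₗ[R] M := LieModule.toEnd R L M
  exact (Submodule.map₂_eq_span_image2 bracket _ _).symm.trans
    (Submodule.map₂_span_span R bracket s t)

theorem span_image2_lie_span_triple (x y z : L) :
    Submodule.span R (Set.image2 (fun u v => ⁅u, v⁆)
        (Submodule.span R {x, y, z} : Set L) (Submodule.span R {x, y, z} : Set L)) =
      Submodule.span R {⁅x, y⁆, ⁅z, x⁆, ⁅z, y⁆} := by
  rw [span_image2_lie_span]
  set N := Submodule.span R {⁅x, y⁆, ⁅z, x⁆, ⁅z, y⁆}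
  apply le_antisymm <;> rw [Submodule.span_le]
  · have hxy : ⁅x, y⁆ ∈ N := Submodule.subset_span (by simp)
    have hzx : ⁅z, x⁆ ∈ N := Submodule.subset_span (by simp)
    have hzy : ⁅z, y⁆ ∈ N := Submodule.subset_span (by simp)
    have hskew {u v : L} (huv : ⁅u, v⁆ ∈ N) : ⁅v, u⁆ ∈ N := lie_skew v u ▸ N.neg_mem huv
    rintro _ ⟨u, rfl | rfl | rfl, v, rfl | rfl | rfl, rfl⟩ <;>
      simp only [lie_self, SetLike.mem_coe, Submodule.zero_mem, hxy, hzx, hzy, hskew]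
  · rintro _ (rfl | rfl | rfl) <;>
      exact Submodule.subset_span (Set.mem_image2_of_mem (by simp) (by simp))

end LieSpan

theorem span_triple_smul_eq_of_isUnit {R M : Type*} [Semiring R] [AddCommMonoid M] [Module R M]
    {r s t : R} (hr : IsUnit r) (hs : IsUnit s) (ht : IsUnit t) (x y z : M) :
    Submodule.span R {r • x, s • y, t • z} = Submodule.span R {x, y, z} := by
  simp only [Submodule.span_insert, Submodule.span_singleton_smul_eq, hr, hs, ht]

open scoped Pointwise in
theorem lie_lie_mem_of_lie_mem_smul {R S L : Type*} [CommRing R] [CommRing S] [Algebra R S]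
    [LieRing L] [LieAlgebra S L] [Module R L] [IsScalarTower R S L]
    {m : Submodule R L} {c : S} {r : R} (hc : c * c = algebraMap R S r)
    (hm : ∀ x ∈ m, ∀ y ∈ m, ⁅x, y⁆ ∈ c • m) {x y z : L} (hx : x ∈ m) (hy : y ∈ m) (hz : z ∈ m) :
    ⁅⁅x, y⁆, z⁆ ∈ m := by
  obtain ⟨w, hw, hxy⟩ := Submodule.mem_smul_pointwise_iff_exists _ _ _ |>.mp (hm x hx y hy)
  obtain ⟨v, hv, hwz⟩ := Submodule.mem_smul_pointwise_iff_exists _ _ _ |>.mp (hm w hw z hz)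
  have hlie : ⁅⁅x, y⁆, z⁆ = r • v := by
    rw [← hxy, smul_lie, ← hwz, smul_smul, hc, algebraMap_smul]
  exact hlie ▸ m.smul_mem r hv

section Brackets

attribute [local instance] LieRing.ofAssociativeRing

theorem lie_matH_matT : ⁅matH, matT⁆ = (2 : ℂ) • matU := by
  ext i j
  fin_cases i <;> fin_cases j <;> norm_num [Ring.lie_def, matH, matT, matU]

theorem lie_matH_matU : ⁅matH, matU⁆ = (2 : ℂ) • matT := by
  ext i j
  fin_cases i <;> fin_cases j <;> norm_num [Ring.lie_def, matH, matT, matU]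

theorem lie_matT_matU : ⁅matT, matU⁆ = (-2 : ℂ) • matH := by
  ext i j
  fin_cases i <;> fin_cases j <;> norm_num [Ring.lie_def, matH, matT, matU]

theorem lie_matH_matT_add_smul_matU (a : ℂ) :
    ⁅matH, matT + a • matU⁆ = (2 : ℂ) • (matU + a • matT) := by
  rw [lie_add, lie_smul, lie_matH_matT, lie_matH_matU]
  module

theorem lie_matH_matU_add_smul_matT (a : ℂ) :
    ⁅matH, matU + a • matT⁆ = (2 : ℂ) • (matT + a • matU) := by
  rw [lie_add, lie_smul, lie_matH_matT, lie_matH_matU]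
  module

theorem lie_matT_add_smul_matU_matU_add_smul_matT (a : ℂ) :
    ⁅matT + a • matU, matU + a • matT⁆ = (-2 * (1 - a ^ 2)) • matH := by
  have hUT : ⁅matU, matT⁆ = (2 : ℂ) • matH := by
    rw [← lie_skew, lie_matT_matU, neg_smul, neg_neg]
  simp only [add_lie, lie_add, smul_lie, lie_smul, lie_self, lie_matT_matU, hUT]
  module

theorem span_image2_lie_mSub (a : ℝ) :
    Submodule.span ℝ (Set.image2 (fun x y => ⁅x, y⁆)
        (mSub a : Set (Matrix (Fin 2) (Fin 2) ℂ)) (mSub a : Set (Matrix (Fin 2) (Fin 2) ℂ))) =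
      Submodule.span ℝ {(-2 * (1 - a ^ 2)) • Complex.I • matH, (2 : ℝ) • (matU + (a : ℂ) • matT),
        (2 : ℝ) • Complex.I • (matT + (a : ℂ) • matU)} := by
  have hTU : ⁅matT + (a : ℂ) • matU, Complex.I • (matU + (a : ℂ) • matT)⁆ =
      (-2 * (1 - a ^ 2)) • Complex.I • matH := by
    rw [lie_smul, lie_matT_add_smul_matU_matU_add_smul_matT, smul_comm Complex.I,
      ← Complex.coe_smul]
    push_cast
    rfl
  have hHT : ⁅matH, matT + (a : ℂ) • matU⁆ = (2 : ℝ) • (matU + (a : ℂ) • matT) := by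
    rw [lie_matH_matT_add_smul_matU, ← Complex.coe_smul, Complex.ofReal_ofNat]
  have hHU : ⁅matH, Complex.I • (matU + (a : ℂ) • matT)⁆ =
      (2 : ℝ) • Complex.I • (matT + (a : ℂ) • matU) := by
    rw [lie_smul, lie_matH_matU_add_smul_matT, smul_comm Complex.I, ← Complex.coe_smul,
      Complex.ofReal_ofNat]
  rw [mSub, span_image2_lie_span_triple, hTU, hHT, hHU]

open scoped Pointwise in
theorem I_smul_mSub (a : ℝ) :
    Complex.I • mSub a = Submodule.span ℝ {Complex.I • matH, matU + (a : ℂ) • matT,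
      Complex.I • (matT + (a : ℂ) • matU)} := by
  have hneg : Complex.I • Complex.I • (matU + (a : ℂ) • matT) =
      (-1 : ℝ) • (matU + (a : ℂ) • matT) := by
    rw [smul_smul, Complex.I_mul_I, neg_one_smul, neg_one_smul]
  rw [mSub, Submodule.smul_span, Set.smul_set_insert, Set.smul_set_insert, Set.smul_set_singleton,
    hneg]
  simp only [Submodule.span_insert, Submodule.span_singleton_smul_eq isUnit_one.neg]
  ac_rfl

open scoped Pointwise in
theorem lie_mem_I_smul_mSub (a : ℝ) {x y : Matrix (Fin 2) (Fin 2) ℂ} (hx : x ∈ mSub a)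
    (hy : y ∈ mSub a) : ⁅x, y⁆ ∈ Complex.I • mSub a := by
  have hxy := Submodule.subset_span (R := ℝ) (Set.mem_image2_of_mem (f := fun x y => ⁅x, y⁆) hx hy)
  rw [span_image2_lie_mSub] at hxy
  rw [I_smul_mSub]
  refine Submodule.span_le.mpr ?_ hxy
  rintro _ (rfl | rfl | rfl) <;>
    exact Submodule.smul_mem _ _ (Submodule.subset_span (by simp))

theorem lie_lie_mem_mSub (a : ℝ) {x y z : Matrix (Fin 2) (Fin 2) ℂ} (hx : x ∈ mSub a)
    (hy : y ∈ mSub a) (hz : z ∈ mSub a) : ⁅⁅x, y⁆, z⁆ ∈ mSub a := by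
  have hI : Complex.I * Complex.I = algebraMap ℝ ℂ (-1) := by simp
  exact lie_lie_mem_of_lie_mem_smul hI (fun _ hu _ hv => lie_mem_I_smul_mSub a hu hv) hx hy hz

end Brackets

/-- `⁅⁅m_a, m_a⁆, m_a⁆ ⊆ m_a`, and if `a² ≠ 1` then
`⁅m_a, m_a⁆ = span_ℝ {iH, U + aT, i(T + aU)}`. -/
theorem stmt_1 (a : ℝ) :
    (∀ x ∈ mSub a, ∀ y ∈ mSub a, ∀ z ∈ mSub a, ⁅⁅x, y⁆, z⁆ ∈ mSub a) ∧
    (a ^ 2 ≠ 1 →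
      Submodule.span ℝ (Set.image2 (fun x y => ⁅x, y⁆) (mSub a : Set (Matrix (Fin 2) (Fin 2) ℂ)) (mSub a : Set (Matrix (Fin 2) (Fin 2) ℂ))) =
        Submodule.span ℝ {Complex.I • matH, matU + (a : ℂ) • matT,
          Complex.I • (matT + (a : ℂ) • matU)}) := by
  refine ⟨fun _ hx _ hy _ hz => lie_lie_mem_mSub a hx hy hz, fun ha => ?_⟩
  have h2 : IsUnit (2 : ℝ) := isUnit_iff_ne_zero.mpr two_ne_zero
  have hc : IsUnit (-2 * (1 - a ^ 2)) :=
    isUnit_iff_ne_zero.mpr (mul_ne_zero (by norm_num) (sub_ne_zero.mpr ha.symm))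
  rw [span_image2_lie_mSub, span_triple_smul_eq_of_isUnit hc h2 h2]
end

section
/- The real span h of {iH, iT, U} is a real Lie subalgebra of sl₂(ℂ) (closed under the Lie bracket), and for every a ∈ ℝ with a² ≠ 1 one has the internal direct sum decomposition of real vector spaces sl₂(ℂ) = m_a ⊕ h, i.e. m_a ∩ h = {0} and m_a + h = sl₂(ℂ). -/
open Matrix

/-- The real span `h` of `{iH, iT, U}`. -/
noncomputable def hSub : Submodule ℝ (Matrix (Fin 2) (Fin 2) ℂ) :=
  Submodule.span ℝ {Complex.I • matH, Complex.I • matT, matU}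

/-- `sl₂(ℂ)` as a real subspace of the complex 2×2 matrices: the kernel of the trace. -/
noncomputable def sl2R : Submodule ℝ (Matrix (Fin 2) (Fin 2) ℂ) :=
  LinearMap.ker ((Matrix.traceLinearMap (Fin 2) ℂ ℂ).restrictScalars ℝ)

/-!
The space `h` is `su(2)`, the traceless skew-Hermitian matrices, hence closed under the bracket,
and `m_0` is the space of traceless Hermitian matrices, so that `sl₂(ℂ) = m_0 ⊕ h` is the
decomposition of a matrix into its Hermitian and skew-Hermitian parts. The generators of `m_a`
differ from those of `m_0` by the elements `aU`, `a(iT)`, `0` of `h`, and changing a basis of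
a complement of `h` by elements of `h` gives a basis of another complement.
-/

section Perturbation

variable {ι R M : Type*} [Ring R] [AddCommGroup M] [Module R M]
  {p : Submodule R M} {v w : ι → M}

theorem mkQ_comp_eq_of_sub_mem (h : ∀ i, w i - v i ∈ p) : p.mkQ ∘ w = p.mkQ ∘ v :=
  funext fun i ↦ (Submodule.Quotient.eq p).2 (h i)

theorem span_range_sup_eq_of_sub_mem (h : ∀ i, w i - v i ∈ p) :
    Submodule.span R (Set.range w) ⊔ p = Submodule.span R (Set.range v) ⊔ p := by
  have map_mkQ_eq : (Submodule.span R (Set.range w)).map p.mkQ =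
      (Submodule.span R (Set.range v)).map p.mkQ := by
    rw [Submodule.map_span, Submodule.map_span, ← Set.range_comp, ← Set.range_comp,
      mkQ_comp_eq_of_sub_mem h]
  simpa only [Submodule.comap_map_eq, Submodule.ker_mkQ] using
    congrArg (Submodule.comap p.mkQ) map_mkQ_eq

theorem disjoint_span_range_of_sub_mem (hv : LinearIndependent R v)
    (hvp : Disjoint (Submodule.span R (Set.range v)) p) (h : ∀ i, w i - v i ∈ p) :
    Disjoint (Submodule.span R (Set.range w)) p := by
  have linearIndependent_mkQ : LinearIndependent R (p.mkQ ∘ w) := by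
    rw [mkQ_comp_eq_of_sub_mem h]
    exact hv.map (by rwa [Submodule.ker_mkQ])
  simpa only [Submodule.ker_mkQ] using Submodule.range_ker_disjoint linearIndependent_mkQ

end Perturbation

section StarModule

variable {R A : Type*} [Ring R] [StarMul R] [TrivialStar R] [Invertible (2 : R)]
  [AddCommGroup A] [StarAddMonoid A] [Module R A] [StarModule R A]

theorem disjoint_selfAdjoint_skewAdjoint :
    Disjoint (selfAdjoint.submodule R A) (skewAdjoint.submodule R A) := by
  refine Submodule.disjoint_def.2 fun x (hx : star x = x) (hx' : star x = -x) ↦ ?_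
  rw [← invOf_two_smul_add_invOf_two_smul R x, ← smul_add]
  nth_rw 1 [← hx, hx', neg_add_cancel, smul_zero]

theorem selfAdjoint_inf_sup_skewAdjoint_inf {p : Submodule R A} (hp : ∀ x ∈ p, star x ∈ p) :
    (selfAdjoint.submodule R A ⊓ p) ⊔ (skewAdjoint.submodule R A ⊓ p) = p := by
  refine le_antisymm (sup_le inf_le_right inf_le_right) fun x hx ↦ ?_
  rw [← StarModule.selfAdjointPart_add_skewAdjointPart R x]
  exact Submodule.add_mem_sup
    ⟨(selfAdjointPart R x).2, p.smul_mem _ (p.add_mem hx (hp x hx))⟩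
    ⟨(skewAdjointPart R x).2, p.smul_mem _ (p.sub_mem hx (hp x hx))⟩

end StarModule

theorem lie_mem_skewAdjoint {A : Type*} [NonUnitalRing A] [StarRing A] {x y : A}
    (hx : x ∈ skewAdjoint A) (hy : y ∈ skewAdjoint A) : ⁅x, y⁆ ∈ skewAdjoint A := by
  rw [skewAdjoint.mem_iff] at *
  simp only [Ring.lie_def, star_sub, star_mul, hx, hy, neg_mul_neg, neg_sub]

theorem mem_sl2R {x : Matrix (Fin 2) (Fin 2) ℂ} : x ∈ sl2R ↔ x.trace = 0 :=
  Iff.rfl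

theorem apply_one_one_of_mem_sl2R {x : Matrix (Fin 2) (Fin 2) ℂ} (hx : x ∈ sl2R) :
    x 1 1 = -x 0 0 := by
  rw [mem_sl2R, Matrix.trace_fin_two] at hx
  exact (neg_eq_of_add_eq_zero_right hx).symm

theorem star_mem_sl2R {x : Matrix (Fin 2) (Fin 2) ℂ} (hx : x ∈ sl2R) : star x ∈ sl2R := by
  rw [mem_sl2R] at *
  rw [Matrix.star_eq_conjTranspose, Matrix.trace_conjTranspose, hx, star_zero]

theorem star_matH : star matH = matH := by
  ext i j; fin_cases i <;> fin_cases j <;> simp [matH]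

theorem star_matT : star matT = matT := by
  ext i j; fin_cases i <;> fin_cases j <;> simp [matT]

theorem star_matU : star matU = -matU := by
  ext i j; fin_cases i <;> fin_cases j <;> simp [matU]

theorem matH_mem_sl2R : matH ∈ sl2R := by
  simp [mem_sl2R, matH, Matrix.trace_fin_two]

theorem matT_mem_sl2R : matT ∈ sl2R := by
  simp [mem_sl2R, matT, Matrix.trace_fin_two]

theorem matU_mem_sl2R : matU ∈ sl2R := by
  simp [mem_sl2R, matU, Matrix.trace_fin_two]

theorem I_smul_mem_sl2R {x : Matrix (Fin 2) (Fin 2) ℂ} (hx : x ∈ sl2R) :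
    Complex.I • x ∈ sl2R := by
  rw [mem_sl2R] at *
  rw [Matrix.trace_smul, hx, smul_zero]

theorem eq_combination_of_mem_skewAdjoint_of_mem_sl2R {x : Matrix (Fin 2) (Fin 2) ℂ}
    (hx : x ∈ skewAdjoint (Matrix (Fin 2) (Fin 2) ℂ)) (htr : x ∈ sl2R) :
    x = (x 0 0).im • Complex.I • matH + (x 0 1).im • Complex.I • matT + (x 0 1).re • matU := by
  have star_apply (i j : Fin 2) : star (x j i) = -x i j := congrFun₂ hx i j
  have re_zero_zero : (x 0 0).re = 0 := self_eq_neg.1 (congrArg Complex.re (star_apply 0 0))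
  have one_zero : x 1 0 = -star (x 0 1) := by rw [star_apply, neg_neg]
  ext i j
  fin_cases i <;> fin_cases j <;>
    simp [matH, matT, matU, Complex.ext_iff, apply_one_one_of_mem_sl2R htr, one_zero, re_zero_zero]

theorem eq_combination_of_mem_selfAdjoint_of_mem_sl2R {x : Matrix (Fin 2) (Fin 2) ℂ}
    (hx : x ∈ selfAdjoint (Matrix (Fin 2) (Fin 2) ℂ)) (htr : x ∈ sl2R) :
    x = (x 0 1).re • matT + (x 0 1).im • Complex.I • matU + (x 0 0).re • matH := by
  have star_apply (i j : Fin 2) : star (x j i) = x i j := congrFun₂ hx i j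
  have im_zero_zero : (x 0 0).im = 0 := Complex.conj_eq_iff_im.1 (star_apply 0 0)
  have one_zero : x 1 0 = star (x 0 1) := (star_apply 1 0).symm
  ext i j
  fin_cases i <;> fin_cases j <;>
    simp [matH, matT, matU, Complex.ext_iff, apply_one_one_of_mem_sl2R htr, one_zero, im_zero_zero]

theorem hSub_eq_skewAdjoint_inf_sl2R :
    hSub = skewAdjoint.submodule ℝ (Matrix (Fin 2) (Fin 2) ℂ) ⊓ sl2R := by
  apply le_antisymm
  · rw [hSub, Submodule.span_le]
    rintro _ (rfl | rfl | rfl)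
    · exact ⟨skewAdjoint.mem_iff.2 (by simp [star_matH]), I_smul_mem_sl2R matH_mem_sl2R⟩
    · exact ⟨skewAdjoint.mem_iff.2 (by simp [star_matT]), I_smul_mem_sl2R matT_mem_sl2R⟩
    · exact ⟨star_matU, matU_mem_sl2R⟩
  · rintro x ⟨hskew, htr⟩
    exact Submodule.mem_span_triple.2
      ⟨_, _, _, (eq_combination_of_mem_skewAdjoint_of_mem_sl2R hskew htr).symm⟩

theorem mSub_zero : mSub 0 = Submodule.span ℝ {matT, Complex.I • matU, matH} := by
  simp only [mSub, Complex.ofReal_zero, zero_smul, add_zero]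

theorem mSub_zero_eq_selfAdjoint_inf_sl2R :
    mSub 0 = selfAdjoint.submodule ℝ (Matrix (Fin 2) (Fin 2) ℂ) ⊓ sl2R := by
  rw [mSub_zero]
  apply le_antisymm
  · rw [Submodule.span_le]
    rintro _ (rfl | rfl | rfl)
    · exact ⟨star_matT, matT_mem_sl2R⟩
    · exact ⟨selfAdjoint.mem_iff.2 (by simp [star_matU]), I_smul_mem_sl2R matU_mem_sl2R⟩
    · exact ⟨star_matH, matH_mem_sl2R⟩
  · rintro x ⟨hself, htr⟩
    exact Submodule.mem_span_triple.2
      ⟨_, _, _, (eq_combination_of_mem_selfAdjoint_of_mem_sl2R hself htr).symm⟩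

/-- The generators `T + aU`, `i(U + aT)`, `H` of `m_a`, as a family. -/
noncomputable def mGen (a : ℝ) : Fin 3 → Matrix (Fin 2) (Fin 2) ℂ :=
  ![matT + (a : ℂ) • matU, Complex.I • (matU + (a : ℂ) • matT), matH]

theorem span_range_mGen (a : ℝ) : Submodule.span ℝ (Set.range (mGen a)) = mSub a := by
  simp only [mGen, mSub, Matrix.range_cons, Matrix.range_empty, Set.union_empty,
    Set.singleton_union]

theorem linearIndependent_mGen_zero : LinearIndependent ℝ (mGen 0) := by
  rw [Fintype.linearIndependent_iff]
  intro c hc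
  have coeff_matH : c 2 = 0 := by
    simpa [mGen, Fin.sum_univ_three, matH, matT, matU] using congrFun₂ hc 0 0
  have coeff_matT_matU : c 0 = 0 ∧ c 1 = 0 := by
    simpa [mGen, Fin.sum_univ_three, matH, matT, matU, Complex.ext_iff] using congrFun₂ hc 0 1
  simp [Fin.forall_fin_succ, coeff_matH, coeff_matT_matU]

theorem mGen_sub_mGen_zero_mem_hSub (a : ℝ) (i : Fin 3) : mGen a i - mGen 0 i ∈ hSub := by
  have hT : Complex.I • matT ∈ hSub := Submodule.subset_span (by simp)
  have hU : matU ∈ hSub := Submodule.subset_span (by simp)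
  fin_cases i
  · simpa [mGen] using hSub.smul_mem a hU
  · simpa [mGen, smul_comm Complex.I a] using hSub.smul_mem a hT
  · simp [mGen]

theorem lie_mem_hSub {x y : Matrix (Fin 2) (Fin 2) ℂ} (hx : x ∈ hSub) (hy : y ∈ hSub) :
    ⁅x, y⁆ ∈ hSub := by
  rw [hSub_eq_skewAdjoint_inf_sl2R] at *
  exact ⟨lie_mem_skewAdjoint hx.1 hy.1, LieAlgebra.matrix_trace_commutator_zero _ _ x y⟩

theorem disjoint_mSub_zero_hSub : Disjoint (mSub 0) hSub := by
  rw [mSub_zero_eq_selfAdjoint_inf_sl2R, hSub_eq_skewAdjoint_inf_sl2R]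
  exact disjoint_selfAdjoint_skewAdjoint.mono inf_le_left inf_le_left

theorem mSub_zero_sup_hSub : mSub 0 ⊔ hSub = sl2R := by
  rw [mSub_zero_eq_selfAdjoint_inf_sl2R, hSub_eq_skewAdjoint_inf_sl2R]
  exact selfAdjoint_inf_sup_skewAdjoint_inf fun _ ↦ star_mem_sl2R

theorem disjoint_mSub_hSub (a : ℝ) : Disjoint (mSub a) hSub := by
  rw [← span_range_mGen]
  refine disjoint_span_range_of_sub_mem linearIndependent_mGen_zero ?_
    (mGen_sub_mGen_zero_mem_hSub a)
  rw [span_range_mGen]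
  exact disjoint_mSub_zero_hSub

theorem mSub_sup_hSub (a : ℝ) : mSub a ⊔ hSub = sl2R := by
  rw [← mSub_zero_sup_hSub, ← span_range_mGen, ← span_range_mGen]
  exact span_range_sup_eq_of_sub_mem (mGen_sub_mGen_zero_mem_hSub a)

theorem stmt_2_general :
    (∀ x ∈ hSub, ∀ y ∈ hSub, ⁅x, y⁆ ∈ hSub) ∧
    (∀ a : ℝ, mSub a ⊓ hSub = ⊥ ∧ mSub a ⊔ hSub = sl2R) :=
  ⟨fun _ hx _ hy ↦ lie_mem_hSub hx hy,
    fun a ↦ ⟨(disjoint_mSub_hSub a).eq_bot, mSub_sup_hSub a⟩⟩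

/-- `h = span_ℝ {iH, iT, U}` is a real Lie subalgebra of `sl₂(ℂ)` (closed under
the commutator bracket), and for every `a` with `a² ≠ 1` one has the internal direct sum
decomposition `sl₂(ℂ) = m_a ⊕ h` of real vector spaces. -/
theorem stmt_2 :
    (∀ x ∈ hSub, ∀ y ∈ hSub, ⁅x, y⁆ ∈ hSub) ∧
    (∀ a : ℝ, a ^ 2 ≠ 1 → mSub a ⊓ hSub = ⊥ ∧ mSub a ⊔ hSub = sl2R) :=
  ⟨stmt_2_general.1, fun a _ ↦ stmt_2_general.2 a⟩
end

section
/- For a ∈ ℝ, the restriction of the real bilinear form B(X,Y) = Re(trace(ad X ∘ ad Y)) to the real span of {iH, U + aT, i(T + aU)} in sl₂(ℂ) is negative definite if and only if −1 < a < 1. -/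
open Matrix

attribute [local instance 100] LieRing.ofAssociativeRing

/-- `sl₂(ℂ)`, the Lie algebra of traceless complex 2×2 matrices. -/
abbrev sl2C : LieSubalgebra ℂ (Matrix (Fin 2) (Fin 2) ℂ) :=
  LieAlgebra.SpecialLinear.sl (Fin 2) ℂ

/-- `H` as an element of `sl₂(ℂ)`. -/
def elH : sl2C :=
  ⟨!![1, 0; 0, -1], show (!![1, 0; 0, -1] : Matrix (Fin 2) (Fin 2) ℂ) ∈
      LinearMap.ker (Matrix.traceLinearMap (Fin 2) ℂ ℂ) from
    LinearMap.mem_ker.2 (by simp [Matrix.trace_fin_two])⟩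

/-- `T` as an element of `sl₂(ℂ)`. -/
def elT : sl2C :=
  ⟨!![0, 1; 1, 0], show (!![0, 1; 1, 0] : Matrix (Fin 2) (Fin 2) ℂ) ∈
      LinearMap.ker (Matrix.traceLinearMap (Fin 2) ℂ ℂ) from
    LinearMap.mem_ker.2 (by simp [Matrix.trace_fin_two])⟩

/-- `U` as an element of `sl₂(ℂ)`. -/
def elU : sl2C :=
  ⟨!![0, 1; -1, 0], show (!![0, 1; -1, 0] : Matrix (Fin 2) (Fin 2) ℂ) ∈
      LinearMap.ker (Matrix.traceLinearMap (Fin 2) ℂ ℂ) from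
    LinearMap.mem_ker.2 (by simp [Matrix.trace_fin_two])⟩

/-- The real bilinear form `B(X,Y) = Re (trace (ad X ∘ ad Y))`, where `ad X ∘ ad Y` is viewed
as a `ℂ`-linear endomorphism of `sl₂(ℂ)`. -/
noncomputable def B (x y : sl2C) : ℝ := (killingForm ℂ sl2C x y).re

/-! On `gl n` one has `ad x ∘ ad y = L_{xy} - L_x R_y - L_y R_x + R_{yx}`, and `L_x R_y` has trace
`tr x * tr y`. Both `ad x` and `ad y` map `gl n` into `sl n`, so the trace over `sl n` is the same
and the Killing form of `sl n` is `2 n tr (x y)`. For `n = 2` it makes `H`, `T`, `U` orthogonal with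
squares `8`, `8`, `-8`; therefore `B x x = -8 (p² + (1 - a²) (q² + r²))` when `x` has real
coordinates `p`, `q`, `r` with respect to `iH`, `U + aT`, `i(T + aU)`. -/

section KillingForm

variable {n R : Type*} [Fintype n] [CommRing R]

lemma trace_mulLeft_comp_mulRight_matrix (x y : Matrix n n R) :
    LinearMap.trace R _ (LinearMap.mulLeft R x ∘ₗ LinearMap.mulRight R y) =
      x.trace * y.trace := by
  classical
  have diag_entry (i j : n) : (x * (single i j (1 : R) * y)) i j = x i i * y j j := by
    simp [Matrix.mul_apply, Matrix.single_apply, ite_and]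
  have repr_apply (z : Matrix n n R) (i j : n) : (stdBasis R n n).repr z (i, j) = z i j := rfl
  simp only [LinearMap.trace_eq_matrix_trace R (stdBasis R n n), Matrix.trace, diag_apply,
    LinearMap.toMatrix_apply, Fintype.sum_prod_type, Finset.sum_mul_sum, LinearMap.comp_apply,
    LinearMap.mulLeft_apply, LinearMap.mulRight_apply, stdBasis_eq_single, repr_apply, diag_entry]

lemma trace_mulLeft_matrix (x : Matrix n n R) :
    LinearMap.trace R _ (LinearMap.mulLeft R x) = Fintype.card n * x.trace := by
  classical
  simpa [mul_comm] using trace_mulLeft_comp_mulRight_matrix x 1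

lemma trace_mulRight_matrix (x : Matrix n n R) :
    LinearMap.trace R _ (LinearMap.mulRight R x) = Fintype.card n * x.trace := by
  classical
  simpa using trace_mulLeft_comp_mulRight_matrix 1 x

variable [DecidableEq n]

lemma killingForm_matrix_apply (x y : Matrix n n R) :
    killingForm R (Matrix n n R) x y =
      2 * Fintype.card n * (x * y).trace - 2 * (x.trace * y.trace) := by
  have ad_comp_ad : LieAlgebra.ad R _ x ∘ₗ LieAlgebra.ad R _ y =
      LinearMap.mulLeft R (x * y) - LinearMap.mulLeft R x ∘ₗ LinearMap.mulRight R y -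
        LinearMap.mulLeft R y ∘ₗ LinearMap.mulRight R x + LinearMap.mulRight R (y * x) := by
    ext1 z
    simp only [LinearMap.comp_apply, LinearMap.add_apply, LinearMap.sub_apply,
      LieAlgebra.ad_apply, LinearMap.mulLeft_apply, LinearMap.mulRight_apply, Ring.lie_def]
    noncomm_ring
  rw [killingForm_apply_apply, ad_comp_ad]
  simp only [map_add, map_sub, trace_mulLeft_matrix, trace_mulRight_matrix,
    trace_mulLeft_comp_mulRight_matrix, trace_mul_comm y x]
  ring

lemma killingForm_sl_apply [IsDomain R] [IsPrincipalIdealRing R]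
    (x y : LieAlgebra.SpecialLinear.sl n R) :
    killingForm R (LieAlgebra.SpecialLinear.sl n R) x y =
      2 * Fintype.card n * (x.1 * y.1).trace := by
  have trace_x : x.1.trace = 0 := x.2
  calc killingForm R (LieAlgebra.SpecialLinear.sl n R) x y
      = killingForm R (Matrix n n R) x.1 y.1 :=
        LinearMap.trace_restrict_eq_of_forall_mem
          (LieAlgebra.SpecialLinear.sl n R).toSubmodule
          (LieAlgebra.ad R _ x.1 ∘ₗ LieAlgebra.ad R _ y.1)
          fun _ ↦ LieAlgebra.matrix_trace_commutator_zero n R _ _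
    _ = 2 * Fintype.card n * (x.1 * y.1).trace := by
        rw [killingForm_matrix_apply, trace_x, zero_mul, mul_zero, sub_zero]

end KillingForm

lemma coe_smul_elH_add_smul_elT_add_smul_elU (α β γ : ℂ) :
    (α • elH + β • elT + γ • elU).1 = !![α, β + γ; β - γ, -α] := by
  ext i j
  fin_cases i <;> fin_cases j <;> simp [elH, elT, elU, sub_eq_add_neg]

lemma killingForm_self_smul_elH_add_smul_elT_add_smul_elU (α β γ : ℂ) :
    killingForm ℂ sl2C (α • elH + β • elT + γ • elU) (α • elH + β • elT + γ • elU) =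
      8 * (α ^ 2 + β ^ 2 - γ ^ 2) := by
  rw [killingForm_sl_apply, coe_smul_elH_add_smul_elT_add_smul_elU, Fintype.card_fin,
    mul_fin_two, trace_fin_two_of]
  push_cast
  ring

lemma B_self_of_eq_combination {a p q r : ℝ} {x : sl2C}
    (hx : p • Complex.I • elH + q • (elU + (a : ℂ) • elT) +
      r • Complex.I • (elT + (a : ℂ) • elU) = x) :
    B x x = -8 * (p ^ 2 + (1 - a ^ 2) * (q ^ 2 + r ^ 2)) := by
  have x_eq : x = (p * Complex.I) • elH + (q * a + r * Complex.I) • elT +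
      (q + r * a * Complex.I) • elU := by
    simp only [← hx, ← Complex.coe_smul]
    module
  have killingForm_eq : killingForm ℂ sl2C x x =
      ((-8 * (p ^ 2 + (1 - a ^ 2) * (q ^ 2 + r ^ 2)) : ℝ) : ℂ) := by
    rw [x_eq, killingForm_self_smul_elH_add_smul_elT_add_smul_elU]
    push_cast
    linear_combination (8 * p ^ 2 + 8 * r ^ 2 * (1 - a ^ 2) : ℂ) * Complex.I_sq
  rw [B, killingForm_eq, Complex.ofReal_re]

lemma elU_add_smul_elT_ne_zero (c : ℂ) : elU + c • elT ≠ 0 := by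
  intro h
  have entry_01 : 1 + c = 0 := by simpa [elU, elT] using congrArg (fun z : sl2C ↦ z.1 0 1) h
  have entry_10 : -1 + c = 0 := by simpa [elU, elT] using congrArg (fun z : sl2C ↦ z.1 1 0) h
  have two_eq_zero : (2 : ℂ) = 0 := by linear_combination entry_01 - entry_10
  exact two_ne_zero two_eq_zero

/-- the restriction of `B` to the real span of `{iH, U + aT, i(T + aU)}` is
negative definite if and only if `-1 < a < 1`. -/
theorem stmt_3 (a : ℝ) :
    (∀ x ∈ Submodule.span ℝ ({Complex.I • elH, elU + (a : ℂ) • elT,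
        Complex.I • (elT + (a : ℂ) • elU)} : Set sl2C),
      x ≠ 0 → B x x < 0)
    ↔ (-1 < a ∧ a < 1) := by
  rw [← abs_lt, ← sq_lt_one_iff_abs_lt_one]
  constructor
  · intro neg_def
    have B_neg := neg_def (elU + (a : ℂ) • elT) (Submodule.subset_span (by simp))
      (elU_add_smul_elT_ne_zero a)
    rw [B_self_of_eq_combination (a := a) (p := 0) (q := 1) (r := 0) (by simp)] at B_neg
    linarith
  · intro ha x hx x_ne_zero
    obtain ⟨p, q, r, x_eq⟩ := Submodule.mem_span_triple.mp hx
    have coord_ne_zero : p ≠ 0 ∨ q ≠ 0 ∨ r ≠ 0 := by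
      contrapose! x_ne_zero
      simp [← x_eq, x_ne_zero]
    have form_pos : 0 < p ^ 2 + (1 - a ^ 2) * (q ^ 2 + r ^ 2) := by
      have := sub_pos.mpr ha
      rcases coord_ne_zero with h | h | h <;> positivity
    rw [B_self_of_eq_combination x_eq]
    linarith
end

section
/- For a ∈ ℝ with a² ≠ 1, one has ⁅h, m_a⁆ ⊆ m_a if and only if a = 0. -/
open Matrix

/-!
`h = su(2)` is the compact real form of `sl₂(ℂ)`, and `m_0` is the space of traceless Hermitian
matrices: `sl₂(ℂ) = h ⊕ m_0` is the Cartan decomposition, so `⁅h, m_0⁆ ⊆ m_0`. Conversely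
`⁅U, H⁆ = -2T`, so invariance forces `T ∈ m_a`; but the real functional
`x ↦ Re (x₀₁ - x₁₀) - a Re (x₀₁ + x₁₀)` vanishes on `m_a` and takes the value `-2a` at `T`.
-/

theorem isSelfAdjoint_lie_of_mem_skewAdjoint {R : Type*} [NonUnitalNonAssocRing R] [StarRing R]
    {x y : R} (hx : x ∈ skewAdjoint R) (hy : IsSelfAdjoint y) : IsSelfAdjoint ⁅x, y⁆ :=
  calc star ⁅x, y⁆ = star y * star x - star x * star y := by
        rw [Ring.lie_def, star_sub, star_mul, star_mul]
    _ = y * -x - -x * y := by rw [skewAdjoint.mem_iff.mp hx, hy.star_eq]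
    _ = ⁅x, y⁆ := by rw [mul_neg, neg_mul, sub_neg_eq_add, neg_add_eq_sub, Ring.lie_def]

theorem hSub_le_skewAdjoint : hSub ≤ skewAdjoint.submodule ℝ (Matrix (Fin 2) (Fin 2) ℂ) := by
  rw [hSub, Submodule.span_le]
  rintro x (rfl | rfl | rfl) <;> refine skewAdjoint.mem_iff.mpr ?_ <;> ext i j <;>
    fin_cases i <;> fin_cases j <;> simp [matH, matT, matU, star_apply]

theorem mem_mSub_zero_iff {x : Matrix (Fin 2) (Fin 2) ℂ} :
    x ∈ mSub 0 ↔ x.IsHermitian ∧ x.trace = 0 := by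
  rw [mSub, Submodule.mem_span_triple]
  constructor
  · rintro ⟨p, q, r, rfl⟩
    refine ⟨?_, by simp [matH, matT, matU, trace_fin_two]⟩
    ext i j
    fin_cases i <;> fin_cases j <;> simp [matH, matT, matU]
  · rintro ⟨hermitian, traceless⟩
    have im_diag : (x 0 0).im = 0 := Complex.conj_eq_iff_im.mp (hermitian.apply 0 0)
    have lower_left : x 1 0 = star (x 0 1) := (hermitian.apply 1 0).symm
    have lower_right : x 1 1 = -x 0 0 := by
      rw [trace_fin_two] at traceless
      exact eq_neg_of_add_eq_zero_right traceless
    refine ⟨(x 0 1).re, (x 0 1).im, (x 0 0).re, ?_⟩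
    ext i j
    fin_cases i <;> fin_cases j <;> apply Complex.ext <;>
      simp [matH, matT, matU, im_diag, lower_left, lower_right]

theorem lie_mem_mSub_zero {x y : Matrix (Fin 2) (Fin 2) ℂ} (hx : x ∈ hSub) (hy : y ∈ mSub 0) :
    ⁅x, y⁆ ∈ mSub 0 :=
  mem_mSub_zero_iff.mpr
    ⟨isSelfAdjoint_lie_of_mem_skewAdjoint (hSub_le_skewAdjoint hx) (mem_mSub_zero_iff.mp hy).1,
      LieAlgebra.matrix_trace_commutator_zero _ ℂ x y⟩

theorem re_sub_eq_mul_re_add_of_mem_mSub {a : ℝ} {x : Matrix (Fin 2) (Fin 2) ℂ}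
    (hx : x ∈ mSub a) : (x 0 1 - x 1 0).re = a * (x 0 1 + x 1 0).re := by
  obtain ⟨p, q, r, combination_eq⟩ := Submodule.mem_span_triple.mp hx
  have re_upper : (x 0 1).re = p + p * a := by simp [← combination_eq, matH, matT, matU]
  have re_lower : (x 1 0).re = p - p * a := by
    simp [← combination_eq, matH, matT, matU, sub_eq_add_neg]
  rw [Complex.sub_re, Complex.add_re, re_upper, re_lower]
  ring

theorem eq_zero_of_matT_mem_mSub {a : ℝ} (hT : matT ∈ mSub a) : a = 0 := by
  simpa [matT, one_add_one_eq_two] using re_sub_eq_mul_re_add_of_mem_mSub hT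

theorem lie_matU_matH : ⁅matU, matH⁆ = (-2 : ℝ) • matT := by
  ext i j
  fin_cases i <;> fin_cases j <;> norm_num [matH, matT, matU, Ring.lie_def]

theorem stmt_5_general (a : ℝ) :
    (∀ x ∈ hSub, ∀ y ∈ mSub a, ⁅x, y⁆ ∈ mSub a) ↔ a = 0 := by
  constructor
  · intro invariant
    have hU : matU ∈ hSub := Submodule.subset_span (by simp)
    have hH : matH ∈ mSub a := Submodule.subset_span (by simp)
    have lie_mem : (-2 : ℝ) • matT ∈ mSub a := lie_matU_matH ▸ invariant _ hU _ hH
    exact eq_zero_of_matT_mem_mSub (((mSub a).smul_mem_iff (by norm_num)).mp lie_mem)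
  · rintro rfl x hx y hy
    exact lie_mem_mSub_zero hx hy

/-- for `a ∈ ℝ` with `a² ≠ 1`, one has `⁅h, m_a⁆ ⊆ m_a` if and only if `a = 0`. -/
theorem stmt_5 (a : ℝ) (ha : a ^ 2 ≠ 1) :
    (∀ x ∈ hSub, ∀ y ∈ mSub a, ⁅x, y⁆ ∈ mSub a) ↔ a = 0 :=
  stmt_5_general a
end

section
/- Let a, b ∈ ℝ with −1 < a < 1 and −1 < b < 1. There exist c₁, c₂, d₁, d₂ ∈ ℝ satisfying the system: c₁²+c₂²+d₁²+d₂² = 1; d₁c₂ − c₁d₂ = 0; d₁c₁ + c₂d₂ = 0; c₁d₂ + c₂d₁ = 0; c₂d₂ − c₁d₁ = 0; (d₂²−d₁² − a(c₂²−c₁²))·b = c₁²−c₂² − a(d₂²−d₁²); (d₁d₂ + c₁c₂a)·b = c₁c₂ − a·d₁d₂; b·(−a(c₁²−c₂²) + (d₂²−d₁²)) = −a(d₂²−d₁²) − (c₁²−c₂²); b·(c₁c₂a − d₁d₂) = d₁d₂·a + c₁c₂, if and only if b = −a. -/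
/-!
The last four equations consist of two pairs of the same shape, one in `(c₁² - c₂², d₂² - d₁²)` and
one in `(c₁ c₂, d₁ d₂)`. Adding and subtracting the equations of such a pair in `(x, y)` gives
`(a + b) y = 0` and `(1 - a b) x = 0`. So if `a + b ≠ 0` and `a b ≠ 1`, then `c₁² = c₂²` and
`c₁ c₂ = 0`, and likewise for `d`; this forces `c = d = 0`, contradicting the normalization.
-/

theorem eq_zero_and_eq_zero_of_mul_eq_zero_of_sq_eq_sq {M : Type*} [MonoidWithZero M] [IsReduced M]
    {x y : M} (hxy : x * y = 0) (hsq : x ^ 2 = y ^ 2) : x = 0 ∧ y = 0 := by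
  have hx : x ^ 3 = 0 := by rw [pow_succ', hsq, sq, ← mul_assoc, hxy, zero_mul]
  have hy : y ^ 3 = 0 := by rw [pow_succ, ← hsq, sq, mul_assoc, hxy, mul_zero]
  exact ⟨eq_zero_of_pow_eq_zero hx, eq_zero_of_pow_eq_zero hy⟩

section NoZeroDivisors

variable {R : Type*} [CommRing R] [NoZeroDivisors R] [NeZero (2 : R)]

theorem add_mul_eq_zero_and_one_sub_mul_mul_eq_zero {a b x y : R}
    (h₁ : (y + a * x) * b = x - a * y) (h₂ : b * (a * x - y) = a * y + x) :
    (a + b) * y = 0 ∧ (1 - a * b) * x = 0 := by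
  have hy : 2 * ((a + b) * y) = 0 := by linear_combination h₁ - h₂
  have hx : 2 * ((1 - a * b) * x) = 0 := by linear_combination -h₁ - h₂
  exact ⟨(mul_eq_zero_iff_left two_ne_zero).mp hy, (mul_eq_zero_iff_left two_ne_zero).mp hx⟩

theorem eq_zero_and_eq_zero_of_add_ne_zero_of_mul_ne_one {a b x y : R}
    (hadd : a + b ≠ 0) (hmul : a * b ≠ 1)
    (h₁ : (y + a * x) * b = x - a * y) (h₂ : b * (a * x - y) = a * y + x) :
    x = 0 ∧ y = 0 := by
  obtain ⟨hy, hx⟩ := add_mul_eq_zero_and_one_sub_mul_mul_eq_zero h₁ h₂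
  exact ⟨(mul_eq_zero.mp hx).resolve_left (sub_ne_zero.mpr hmul.symm),
    (mul_eq_zero.mp hy).resolve_left hadd⟩

theorem stmt_6_general (a b : R) :
    (∃ c₁ c₂ d₁ d₂ : R,
      c₁^2 + c₂^2 + d₁^2 + d₂^2 = 1 ∧
      d₁*c₂ - c₁*d₂ = 0 ∧
      d₁*c₁ + c₂*d₂ = 0 ∧
      c₁*d₂ + c₂*d₁ = 0 ∧
      c₂*d₂ - c₁*d₁ = 0 ∧
      (d₂^2 - d₁^2 - a*(c₂^2 - c₁^2)) * b = c₁^2 - c₂^2 - a*(d₂^2 - d₁^2) ∧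
      (d₁*d₂ + c₁*c₂*a) * b = c₁*c₂ - a*d₁*d₂ ∧
      b * (-(a*(c₁^2 - c₂^2)) + (d₂^2 - d₁^2)) = -(a*(d₂^2 - d₁^2)) - (c₁^2 - c₂^2) ∧
      b * (c₁*c₂*a - d₁*d₂) = d₁*d₂*a + c₁*c₂)
    ↔ b = -a ∨ a * b = 1 := by
  constructor
  · rintro ⟨c₁, c₂, d₁, d₂, hnorm, -, -, -, -, hsq₁, hmul₁, hsq₂, hmul₂⟩
    by_contra! ⟨hneg, hab⟩
    have hadd : a + b ≠ 0 := fun h => hneg (eq_neg_of_add_eq_zero_right h)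
    obtain ⟨hc_sq, hd_sq⟩ : c₁^2 - c₂^2 = 0 ∧ d₂^2 - d₁^2 = 0 :=
      eq_zero_and_eq_zero_of_add_ne_zero_of_mul_ne_one hadd hab
        (by linear_combination hsq₁) (by linear_combination -hsq₂)
    obtain ⟨hc_mul, hd_mul⟩ : c₁ * c₂ = 0 ∧ d₁ * d₂ = 0 :=
      eq_zero_and_eq_zero_of_add_ne_zero_of_mul_ne_one hadd hab
        (by linear_combination hmul₁) (by linear_combination hmul₂)
    obtain ⟨rfl, rfl⟩ :=
      eq_zero_and_eq_zero_of_mul_eq_zero_of_sq_eq_sq hc_mul (sub_eq_zero.mp hc_sq)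
    obtain ⟨rfl, rfl⟩ :=
      eq_zero_and_eq_zero_of_mul_eq_zero_of_sq_eq_sq hd_mul (sub_eq_zero.mp hd_sq).symm
    have : Nontrivial R := nontrivial_of_ne 2 0 two_ne_zero
    simp at hnorm
  · rintro (rfl | hab)
    · exact ⟨0, 0, 1, 0, by simp⟩
    · exact ⟨1, 0, 0, 0, by simp [hab, mul_comm b a]⟩

end NoZeroDivisors

/-- For `a, b ∈ (-1,1)`, the system of nine polynomial equations in
`c₁, c₂, d₁, d₂` has a solution if and only if `b = -a`. -/
theorem stmt_6 (a b : ℝ) (ha : -1 < a ∧ a < 1) (hb : -1 < b ∧ b < 1) :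
    (∃ c₁ c₂ d₁ d₂ : ℝ,
      c₁^2 + c₂^2 + d₁^2 + d₂^2 = 1 ∧
      d₁*c₂ - c₁*d₂ = 0 ∧
      d₁*c₁ + c₂*d₂ = 0 ∧
      c₁*d₂ + c₂*d₁ = 0 ∧
      c₂*d₂ - c₁*d₁ = 0 ∧
      (d₂^2 - d₁^2 - a*(c₂^2 - c₁^2)) * b = c₁^2 - c₂^2 - a*(d₂^2 - d₁^2) ∧
      (d₁*d₂ + c₁*c₂*a) * b = c₁*c₂ - a*d₁*d₂ ∧
      b * (-(a*(c₁^2 - c₂^2)) + (d₂^2 - d₁^2)) = -(a*(d₂^2 - d₁^2)) - (c₁^2 - c₂^2) ∧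
      b * (c₁*c₂*a - d₁*d₂) = d₁*d₂*a + c₁*c₂)
    ↔ b = -a := by
  have hab : a * b < 1 := by nlinarith [ha.1, ha.2, hb.1, hb.2]
  simpa only [hab.ne, or_false] using stmt_6_general a b
end

section
/- Let S be the group whose underlying set is SL₂(ℝ) × {traceless real 2×2 matrices} with multiplication (A₁,X₁)∘(A₂,X₂) = (A₁A₂, A₂⁻¹X₁A₂ + X₂). Then for every (A,X) ∈ S there exist unique a > 0, b, u, k, l ∈ ℝ and t ∈ [0, 2π) such that (A,X) = (!![a, 0; b, a⁻¹], !![0, u; −u, 0]) ∘ (!![cos t, sin t; −sin t, cos t], !![k, l; l, −k]). -/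
open Matrix Real

/-- The rotation matrix `!![cos t, sin t; −sin t, cos t]`. -/
noncomputable def rot (t : ℝ) : Matrix (Fin 2) (Fin 2) ℝ :=
  !![Real.cos t, Real.sin t; -Real.sin t, Real.cos t]

/-!
The upper row of `!![a, 0; b, a⁻¹] * rot t` is `(a cos t, a sin t)`, so `a` and `t` are the polar
coordinates of the upper row of `A`. Then `b` is the inner product of the lower row of `A` with
`(cos t, sin t)`, and `det A = 1` takes care of the remaining entry. Rotations commute with
skew-symmetric matrices, so the equation for `X` is its splitting into skew-symmetric and symmetric
parts, whatever `t` is.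
-/

theorem eq_of_cos_eq_of_sin_eq_of_mem_Ico {θ₀ s t : ℝ} (hs : s ∈ Set.Ico θ₀ (θ₀ + 2 * π))
    (ht : t ∈ Set.Ico θ₀ (θ₀ + 2 * π)) (hcos : cos s = cos t) (hsin : sin s = sin t) : s = t :=
  haveI : Fact (0 < 2 * π) := ⟨two_pi_pos⟩
  (AddCircle.coe_eq_coe_iff_of_mem_Ico hs ht).1 (Angle.cos_sin_inj hcos hsin)

theorem exists_polar_coordinates (θ₀ : ℝ) {x y : ℝ} (hxy : (x, y) ≠ 0) :
    ∃ r t : ℝ, 0 < r ∧ t ∈ Set.Ico θ₀ (θ₀ + 2 * π) ∧ x = r * cos t ∧ y = r * sin t := by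
  let z : ℂ := ⟨x, y⟩
  have hz : z ≠ 0 := by simpa [z, Complex.ext_iff] using hxy
  let t := toIcoMod two_pi_pos θ₀ z.arg
  have hcos : cos t = cos z.arg := cos_periodic.sub_zsmul_eq _
  have hsin : sin t = sin z.arg := sin_periodic.sub_zsmul_eq _
  refine ⟨‖z‖, t, norm_pos_iff.2 hz, toIcoMod_mem_Ico _ _ _, ?_, ?_⟩
  · rw [hcos, Complex.norm_mul_cos_arg]
  · rw [hsin, Complex.norm_mul_sin_arg]

theorem polar_coordinates_unique {θ₀ r r' t t' : ℝ} (hr : 0 < r) (hr' : 0 < r')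
    (ht : t ∈ Set.Ico θ₀ (θ₀ + 2 * π)) (ht' : t' ∈ Set.Ico θ₀ (θ₀ + 2 * π))
    (hcos : r * cos t = r' * cos t') (hsin : r * sin t = r' * sin t') : r = r' ∧ t = t' := by
  have hsq : r ^ 2 = r' ^ 2 := by
    calc r ^ 2 = (r * cos t) ^ 2 + (r * sin t) ^ 2 := by
          linear_combination -r ^ 2 * sin_sq_add_cos_sq t
      _ = (r' * cos t') ^ 2 + (r' * sin t') ^ 2 := by rw [hcos, hsin]
      _ = r' ^ 2 := by linear_combination r' ^ 2 * sin_sq_add_cos_sq t'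
  obtain rfl : r = r' := (pow_left_inj₀ hr.le hr'.le two_ne_zero).1 hsq
  exact ⟨rfl, eq_of_cos_eq_of_sin_eq_of_mem_Ico ht ht' (mul_left_cancel₀ hr.ne' hcos)
    (mul_left_cancel₀ hr.ne' hsin)⟩

theorem lowerTriangular_mul_rot (a b d t : ℝ) :
    !![a, 0; b, d] * rot t =
      !![a * cos t, a * sin t; b * cos t - d * sin t, b * sin t + d * cos t] := by
  simp [rot, sub_eq_add_neg]

theorem eq_lowerTriangular_mul_rot_iff {A : Matrix (Fin 2) (Fin 2) ℝ} (hA : A.det = 1)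
    {a b t : ℝ} :
    A = !![a, 0; b, a⁻¹] * rot t ↔
      A 0 0 = a * cos t ∧ A 0 1 = a * sin t ∧ b = A 1 0 * cos t + A 1 1 * sin t := by
  have hcs := sin_sq_add_cos_sq t
  rw [lowerTriangular_mul_rot]
  constructor
  · rintro rfl
    refine ⟨rfl, rfl, ?_⟩
    simp only [of_apply, cons_val_zero, cons_val_one]
    linear_combination -b * hcs
  · rintro ⟨h00, h01, rfl⟩
    have hinv : A 1 1 * cos t - A 1 0 * sin t = a⁻¹ := by
      rw [det_fin_two, h00, h01] at hA
      exact eq_inv_of_mul_eq_one_left (by linear_combination hA)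
    have h10 : A 1 0 = (A 1 0 * cos t + A 1 1 * sin t) * cos t - a⁻¹ * sin t := by
      rw [← hinv]
      linear_combination -A 1 0 * hcs
    have h11 : A 1 1 = (A 1 0 * cos t + A 1 1 * sin t) * sin t + a⁻¹ * cos t := by
      rw [← hinv]
      linear_combination -A 1 1 * hcs
    rw [← h00, ← h01, ← h10, ← h11]
    exact eta_fin_two A

theorem upper_row_ne_zero_of_det_ne_zero {R : Type*} [CommRing R] {A : Matrix (Fin 2) (Fin 2) R}
    (hA : A.det ≠ 0) : (A 0 0, A 0 1) ≠ 0 := by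
  intro h
  obtain ⟨h00, h01⟩ := Prod.mk_eq_zero.1 h
  exact hA (by rw [det_fin_two, h00, h01]; ring)

theorem existsUnique_lowerTriangular_mul_rot (θ₀ : ℝ) {A : Matrix (Fin 2) (Fin 2) ℝ}
    (hA : A.det = 1) :
    ∃! p : ℝ × ℝ × ℝ, 0 < p.1 ∧ p.2.2 ∈ Set.Ico θ₀ (θ₀ + 2 * π) ∧
      A = !![p.1, 0; p.2.1, p.1⁻¹] * rot p.2.2 := by
  obtain ⟨a, t, ha, ht, h00, h01⟩ :=
    exists_polar_coordinates θ₀ (upper_row_ne_zero_of_det_ne_zero (hA ▸ one_ne_zero))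
  refine ⟨(a, A 1 0 * cos t + A 1 1 * sin t, t),
    ⟨ha, ht, (eq_lowerTriangular_mul_rot_iff hA).2 ⟨h00, h01, rfl⟩⟩, ?_⟩
  rintro ⟨a', b', t'⟩ ⟨ha', ht', hA'⟩
  dsimp only at ha' ht' hA'
  obtain ⟨h00', h01', rfl⟩ := (eq_lowerTriangular_mul_rot_iff hA).1 hA'
  obtain ⟨rfl, rfl⟩ :=
    polar_coordinates_unique ha' ha ht' ht (h00'.symm.trans h00) (h01'.symm.trans h01)
  rfl

theorem det_rot (t : ℝ) : (rot t).det = 1 := by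
  rw [rot, det_fin_two_of]
  linear_combination sin_sq_add_cos_sq t

theorem skew_mul_rot_comm (u t : ℝ) : !![0, u; -u, 0] * rot t = rot t * !![0, u; -u, 0] := by
  simp [rot, mul_comm u]

theorem rot_inv_mul_skew_mul_rot (u t : ℝ) :
    (rot t)⁻¹ * !![0, u; -u, 0] * rot t = !![0, u; -u, 0] := by
  rw [mul_assoc, skew_mul_rot_comm, nonsing_inv_mul_cancel_left _ _ (by simp [det_rot])]

theorem existsUnique_skew_add_symm_of_trace_eq_zero {K : Type*} [Field K] [NeZero (2 : K)]
    {X : Matrix (Fin 2) (Fin 2) K} (hX : X.trace = 0) :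
    ∃! p : K × K × K, X = !![0, p.1; -p.1, 0] + !![p.2.1, p.2.2; p.2.2, -p.2.1] := by
  refine ⟨((X 0 1 - X 1 0) / 2, X 0 0, (X 0 1 + X 1 0) / 2), ?_, ?_⟩
  · have h11 : X 1 1 = -X 0 0 := by
      rw [trace_fin_two] at hX
      linear_combination hX
    nth_rw 1 [eta_fin_two X, h11]
    simp only [of_add_of, add_cons, head_cons, zero_add, tail_cons, empty_add_empty,
      EmbeddingLike.apply_eq_iff_eq, vecCons_inj, and_true, true_and]
    exact ⟨by field, by field⟩
  · rintro ⟨u, k, l⟩ rfl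
    have hl : (u + l + (-u + l)) / 2 = l := by field
    simp [hl]

/-- in the group with underlying set `SL₂(ℝ) × {traceless real 2×2 matrices}` and
multiplication `(A₁,X₁)∘(A₂,X₂) = (A₁A₂, A₂⁻¹X₁A₂ + X₂)`, every element `(A,X)` is uniquely
`(!![a,0;b,a⁻¹], !![0,u;−u,0]) ∘ (!![cos t, sin t; −sin t, cos t], !![k,l;l,−k])` with
`a > 0`, `b, u, k, l ∈ ℝ` and `t ∈ [0, 2π)`. -/
theorem stmt_9 (A : Matrix.SpecialLinearGroup (Fin 2) ℝ)
    (X : Matrix (Fin 2) (Fin 2) ℝ) (hX : X.trace = 0) :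
    ∃! p : ℝ × ℝ × ℝ × ℝ × ℝ × ℝ,
      0 < p.1 ∧ p.2.2.2.2.2 ∈ Set.Ico (0 : ℝ) (2 * Real.pi) ∧
      (A : Matrix (Fin 2) (Fin 2) ℝ) = !![p.1, 0; p.2.1, p.1⁻¹] * rot p.2.2.2.2.2 ∧
      X = (rot p.2.2.2.2.2)⁻¹ * !![0, p.2.2.1; -p.2.2.1, 0] * rot p.2.2.2.2.2 +
        !![p.2.2.2.1, p.2.2.2.2.1; p.2.2.2.2.1, -p.2.2.2.1] := by
  obtain ⟨⟨a, b, t⟩, ⟨ha, ht, hA⟩, hA_unique⟩ :=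
    existsUnique_lowerTriangular_mul_rot 0 A.det_coe
  obtain ⟨⟨u, k, l⟩, hX_eq, hX_unique⟩ := existsUnique_skew_add_symm_of_trace_eq_zero hX
  simp only [zero_add] at ht hA_unique
  simp only [rot_inv_mul_skew_mul_rot]
  refine ⟨(a, b, u, k, l, t), ⟨ha, ht, hA, hX_eq⟩, ?_⟩
  rintro ⟨a', b', u', k', l', t'⟩ ⟨ha', ht', hA', hX'⟩
  cases hA_unique (a', b', t') ⟨ha', ht', hA'⟩
  cases hX_unique (u', k', l') hX'
  rfl
end

section
/- Every 3-dimensional Lie subalgebra of so₃(ℝ) × so₃(ℝ) that contains no nonzero Lie ideal of so₃(ℝ) × so₃(ℝ) is mapped by some Lie algebra automorphism of so₃(ℝ) × so₃(ℝ) onto the diagonal {(X, X) : X ∈ so₃(ℝ)}. -/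
open Matrix

attribute [local instance 100] LieRing.ofAssociativeRing

/-- The componentwise Lie bracket on a product of Lie rings. -/
instance prodLieRing (L M : Type*) [LieRing L] [LieRing M] : LieRing (L × M) where
  bracket p q := (⁅p.1, q.1⁆, ⁅p.2, q.2⁆)
  add_lie x y z := by
    show (⁅x.1 + y.1, z.1⁆, ⁅x.2 + y.2, z.2⁆)
      = (⁅x.1, z.1⁆, ⁅x.2, z.2⁆) + (⁅y.1, z.1⁆, ⁅y.2, z.2⁆)
    simp [add_lie, Prod.ext_iff]
  lie_add x y z := by
    show (⁅x.1, y.1 + z.1⁆, ⁅x.2, y.2 + z.2⁆)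
      = (⁅x.1, y.1⁆, ⁅x.2, y.2⁆) + (⁅x.1, z.1⁆, ⁅x.2, z.2⁆)
    simp [lie_add, Prod.ext_iff]
  lie_self x := by
    show (⁅x.1, x.1⁆, ⁅x.2, x.2⁆) = (0 : L × M)
    simp [Prod.ext_iff]
  leibniz_lie x y z := by
    show (⁅x.1, ⁅y.1, z.1⁆⁆, ⁅x.2, ⁅y.2, z.2⁆⁆)
      = (⁅⁅x.1, y.1⁆, z.1⁆, ⁅⁅x.2, y.2⁆, z.2⁆) + (⁅y.1, ⁅x.1, z.1⁆⁆, ⁅y.2, ⁅x.2, z.2⁆⁆)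
    simp [Prod.ext_iff]

/-- The product of two Lie algebras, with the componentwise bracket. -/
instance prodLieAlgebra (R L M : Type*) [CommRing R] [LieRing L] [LieRing M]
    [LieAlgebra R L] [LieAlgebra R M] : LieAlgebra R (L × M) where
  lie_smul t x y := by
    show (⁅x.1, t • y.1⁆, ⁅x.2, t • y.2⁆) = t • (⁅x.1, y.1⁆, ⁅x.2, y.2⁆)
    simp [Prod.ext_iff]

/-- `so₃(ℝ)`, the Lie algebra of skew-symmetric real 3×3 matrices. -/
abbrev so3R : LieSubalgebra ℝ (Matrix (Fin 3) (Fin 3) ℝ) :=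
  LieAlgebra.Orthogonal.so (Fin 3) ℝ

/-- The diagonal `{(X, X)}` of `so₃(ℝ) × so₃(ℝ)`, as a real subspace. -/
def hDiag : Submodule ℝ (so3R × so3R) :=
  LinearMap.range (LinearMap.prod LinearMap.id LinearMap.id)

/-!
If `h` projects onto the first factor of `L × L`, then `h ∩ (L × 0)` is an ideal of `L × L`: it is
stable under `h` and commutes with `0 × L`. When `h` contains no nonzero ideal this makes the second
projection injective on `h`. In `so₃` two independent vectors `u`, `v` and their bracket `u ⨯₃ v`
form a basis, so proper subalgebras have dimension at most `1`; as `1 + 1 < 3`, a subalgebra of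
dimension `3` has to project onto one of the factors. Both projections are then isomorphisms, and
`h` is the graph of an automorphism of `so₃`.
-/

open Module

section CoreFree

variable {R L L₁ L₂ : Type*} [CommRing R] [LieRing L] [LieAlgebra R L] [LieRing L₁]
  [LieAlgebra R L₁] [LieRing L₂] [LieAlgebra R L₂]

/-- A Lie subalgebra is core-free if it contains no nonzero Lie ideal of the ambient Lie algebra. -/
def IsCoreFree (h : LieSubalgebra R L) : Prop :=
  ∀ I : LieIdeal R L, I.toSubmodule ≤ h.toSubmodule → I = ⊥

theorem IsCoreFree.injective_comp_incl {h : LieSubalgebra R L} (hcore : IsCoreFree h)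
    {f : L →ₗ⁅R⁆ L₁} {g : L →ₗ⁅R⁆ L₂} (hfg : ⁅f.ker, g.ker⁆ = ⊥)
    (hf : Function.Surjective (f.comp h.incl)) :
    Function.Injective (g.comp h.incl) := by
  let I : LieIdeal R L :=
    { h.toSubmodule ⊓ g.ker.toSubmodule with
      lie_mem := by
        rintro x z ⟨hzh, hzg⟩
        obtain ⟨⟨y, hyh⟩, hyx : f y = f x⟩ := hf (f x)
        have hxy : x - y ∈ f.ker := by rw [LieHom.mem_ker, map_sub, hyx, sub_self]
        have hlie : ⁅x, z⁆ = ⁅y, z⁆ := by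
          rw [← sub_eq_zero, ← sub_lie]
          exact (LieSubmodule.lie_eq_bot_iff _ _).1 hfg _ hxy z hzg
        exact ⟨hlie ▸ h.lie_mem hyh hzh, g.ker.lie_mem hzg⟩ }
  have hI : I = ⊥ := hcore I inf_le_left
  refine (injective_iff_map_eq_zero _).2 fun z hz ↦ Subtype.ext ?_
  have hzI : (z : L) ∈ I := ⟨z.2, (LieHom.mem_ker ..).2 hz⟩
  rwa [hI, LieSubmodule.mem_bot] at hzI

end CoreFree

section Product

variable {R L M L' M' : Type*} [CommRing R] [LieRing L] [LieAlgebra R L] [LieRing M]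
  [LieAlgebra R M] [LieRing L'] [LieAlgebra R L'] [LieRing M'] [LieAlgebra R M']

theorem lie_ker_fst_ker_snd : ⁅(LieHom.fst R L M).ker, (LieHom.snd R L M).ker⁆ = ⊥ := by
  rw [LieSubmodule.lie_eq_bot_iff]
  rintro ⟨a, b⟩ ha ⟨c, d⟩ hd
  obtain rfl : a = 0 := ha
  obtain rfl : d = 0 := hd
  exact Prod.ext (zero_lie c) (lie_zero b)

theorem exists_lieEquiv_eq_graph {h : LieSubalgebra R (L × M)}
    (hfst : Function.Bijective ((LieHom.fst R L M).comp h.incl))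
    (hsnd : Function.Bijective ((LieHom.snd R L M).comp h.incl)) :
    ∃ e : L ≃ₗ⁅R⁆ M, h.toSubmodule = LinearMap.graph (e : L →ₗ[R] M) := by
  obtain ⟨e, he⟩ := Submodule.exists_equiv_eq_graph (G := h.toSubmodule) hfst hsnd
  have hgraph (x : L) : (x, e x) ∈ h.toSubmodule := he ▸ (rfl : e x = e x)
  have hlie (x y : L) : ⁅e x, e y⁆ = e ⁅x, y⁆ := by
    have hxy : ⁅(x, e x), (y, e y)⁆ ∈ h.toSubmodule := h.lie_mem (hgraph x) (hgraph y)
    rwa [he] at hxy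
  exact ⟨{ e with map_lie' := (hlie _ _).symm }, he⟩

/-- The product of two Lie algebra isomorphisms, acting componentwise. -/
def lieEquivProdCongr (e : L ≃ₗ⁅R⁆ L') (e' : M ≃ₗ⁅R⁆ M') : (L × M) ≃ₗ⁅R⁆ (L' × M') :=
  { e.toLinearEquiv.prodCongr e'.toLinearEquiv with
    map_lie' := Prod.ext (e.map_lie _ _) (e'.map_lie _ _) }

theorem map_lieEquivProdCongr_graph (e : L ≃ₗ⁅R⁆ M) :
    Submodule.map (lieEquivProdCongr e LieEquiv.refl).toLieHom.toLinearMap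
      (LinearMap.graph (e : L →ₗ[R] M)) = LinearMap.range (LinearMap.prod .id .id) := by
  rw [LinearMap.graph_eq_range_prod, ← LinearMap.range_comp]
  exact LinearMap.range_comp_of_range_eq_top (LinearMap.prod .id .id) e.toLinearEquiv.range

end Product

section Dimension

variable {K : Type*} [Field K]

theorem finrank_le_finrank_range_add_finrank_range {U V W : Type*} [AddCommGroup U] [Module K U]
    [FiniteDimensional K U] [AddCommGroup V] [Module K V] [AddCommGroup W] [Module K W]
    {f : U →ₗ[K] V} {g : U →ₗ[K] W} (hfg : Function.Injective (f.prod g)) :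
    finrank K U ≤ finrank K f.range + finrank K g.range := by
  rw [← finrank_prod]
  refine LinearMap.finrank_le_finrank_of_injective (f := f.rangeRestrict.prod g.rangeRestrict) ?_
  intro x y hxy
  exact hfg (Prod.ext (congrArg (·.1.1) hxy) (congrArg (·.2.1) hxy))

variable {L M : Type*} [LieRing L] [LieAlgebra K L] [FiniteDimensional K L] [LieRing M]
  [LieAlgebra K M] [FiniteDimensional K M] {h : LieSubalgebra K (L × M)}

theorem surjective_fst_or_surjective_snd
    (hL : ∀ S : LieSubalgebra K L, S ≠ ⊤ → 2 * finrank K S < finrank K L)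
    (hM : ∀ S : LieSubalgebra K M, S ≠ ⊤ → 2 * finrank K S < finrank K M)
    (hdim : finrank K L + finrank K M ≤ 2 * finrank K h) :
    Function.Surjective ((LieHom.fst K L M).comp h.incl) ∨
      Function.Surjective ((LieHom.snd K L M).comp h.incl) := by
  set p := (LieHom.fst K L M).comp h.incl
  set q := (LieHom.snd K L M).comp h.incl
  by_contra! ⟨hp, hq⟩
  have hp_lt : 2 * finrank K p.range < finrank K L := hL _ (mt (LieHom.range_eq_top p).1 hp)
  have hq_lt : 2 * finrank K q.range < finrank K M := hM _ (mt (LieHom.range_eq_top q).1 hq)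
  have hle : finrank K h ≤ finrank K p.range + finrank K q.range :=
    finrank_le_finrank_range_add_finrank_range (f := p.toLinearMap) (g := q.toLinearMap)
      Subtype.val_injective
  omega

theorem IsCoreFree.bijective_fst_and_bijective_snd (hcore : IsCoreFree h)
    (hL : ∀ S : LieSubalgebra K L, S ≠ ⊤ → 2 * finrank K S < finrank K L)
    (hM : ∀ S : LieSubalgebra K M, S ≠ ⊤ → 2 * finrank K S < finrank K M)
    (hLM : finrank K L = finrank K M) (hdim : finrank K L ≤ finrank K h) :
    Function.Bijective ((LieHom.fst K L M).comp h.incl) ∧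
      Function.Bijective ((LieHom.snd K L M).comp h.incl) := by
  set p := (LieHom.fst K L M).comp h.incl
  set q := (LieHom.snd K L M).comp h.incl
  have hq_inj (hp : Function.Surjective p) : Function.Injective q :=
    hcore.injective_comp_incl lie_ker_fst_ker_snd hp
  have hp_inj (hq : Function.Surjective q) : Function.Injective p :=
    hcore.injective_comp_incl ((LieSubmodule.lie_comm _ _).trans lie_ker_fst_ker_snd) hq
  have hsurj : Function.Surjective p ∨ Function.Surjective q :=
    surjective_fst_or_surjective_snd hL hM (by omega)
  have hhL : finrank K h = finrank K L := by
    refine le_antisymm ?_ hdim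
    rcases hsurj with hp | hq
    · exact hLM ▸ q.toLinearMap.finrank_le_finrank_of_injective (hq_inj hp)
    · exact p.toLinearMap.finrank_le_finrank_of_injective (hp_inj hq)
  have hp_iff : Function.Injective p ↔ Function.Surjective p :=
    p.toLinearMap.injective_iff_surjective_of_finrank_eq_finrank hhL
  have hq_iff : Function.Injective q ↔ Function.Surjective q :=
    q.toLinearMap.injective_iff_surjective_of_finrank_eq_finrank (hhL.trans hLM)
  unfold Function.Bijective
  tauto

end Dimension

theorem stmt_13_general {K L : Type*} [Field K] [LieRing L] [LieAlgebra K L]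
    [FiniteDimensional K L]
    (hL : ∀ S : LieSubalgebra K L, S ≠ ⊤ → 2 * finrank K S < finrank K L)
    (h : LieSubalgebra K (L × L)) (hdim : finrank K L ≤ finrank K h) (hcore : IsCoreFree h) :
    ∃ φ : (L × L) ≃ₗ⁅K⁆ (L × L),
      Submodule.map φ.toLieHom.toLinearMap h.toSubmodule =
        LinearMap.range (LinearMap.prod .id .id) := by
  obtain ⟨hfst, hsnd⟩ := hcore.bijective_fst_and_bijective_snd hL hL rfl hdim
  obtain ⟨e, he⟩ := exists_lieEquiv_eq_graph hfst hsnd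
  exact ⟨lieEquivProdCongr e LieEquiv.refl, he ▸ map_lieEquivProdCongr_graph e⟩

section OrthogonalThree

open LieAlgebra.Orthogonal

section AxialVector

variable {R : Type*} [CommRing R]

theorem so_apply_swap {n : Type*} [DecidableEq n] [Fintype n] (X : so n R) (i j : n) :
    X.1 j i = -X.1 i j :=
  congrFun₂ ((mem_so n R X.1).1 X.2) i j

variable [NoZeroDivisors R] [CharZero R]

theorem so_apply_self {n : Type*} [DecidableEq n] [Fintype n] (X : so n R) (i : n) :
    X.1 i i = 0 :=
  CharZero.eq_neg_self_iff.1 (so_apply_swap X i i)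

/-- The vector `v` representing a skew-symmetric `3 × 3` matrix `X` through `X *ᵥ w = v ⨯₃ w`. -/
def axialVector : so (Fin 3) R ≃ₗ[R] (Fin 3 → R) where
  toFun X := ![X.1 2 1, X.1 0 2, X.1 1 0]
  map_add' X Y := by ext i; fin_cases i <;> rfl
  map_smul' c X := by ext i; fin_cases i <;> rfl
  invFun v := ⟨!![0, -v 2, v 1; v 2, 0, -v 0; -v 1, v 0, 0], by
    rw [mem_so]
    ext i j
    fin_cases i <;> fin_cases j <;> simp⟩
  left_inv X := by
    ext i j
    fin_cases i <;> fin_cases j <;>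
      simp [so_apply_self, so_apply_swap X 0 1, so_apply_swap X 0 2, so_apply_swap X 1 2]
  right_inv v := by ext i; fin_cases i <;> rfl

theorem axialVector_lie (X Y : so (Fin 3) R) :
    axialVector ⁅X, Y⁆ = axialVector X ⨯₃ axialVector Y := by
  have hlie : ⁅X, Y⁆.1 = X.1 * Y.1 - Y.1 * X.1 := rfl
  have hswap := so_apply_swap (n := Fin 3) (R := R)
  ext i
  fin_cases i <;>
    simp [axialVector, cross_apply, hlie, mul_apply, Fin.sum_univ_three, so_apply_self,
      hswap _ 0 1, hswap _ 1 2] <;>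
    ring

theorem finrank_so_three : finrank R (so (Fin 3) R) = 3 := by
  rw [axialVector.finrank_eq, finrank_fin_fun]

instance : Module.Finite R (so (Fin 3) R) :=
  .equiv axialVector.symm

end AxialVector

variable {K : Type*} [Field K] [LinearOrder K] [IsStrictOrderedRing K]

theorem linearIndependent_cross {u v : Fin 3 → K} (huv : LinearIndependent K ![u, v]) :
    LinearIndependent K ![u, v, u ⨯₃ v] := by
  have hdet : det ![u, v, u ⨯₃ v] = u ⨯₃ v ⬝ᵥ u ⨯₃ v := by
    rw [← triple_product_eq_det, triple_product_permutation, triple_product_permutation]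
  refine linearIndependent_rows_of_det_ne_zero (A := ![u, v, u ⨯₃ v]) ?_
  rw [hdet, Ne, dotProduct_self_eq_zero]
  exact crossProduct_ne_zero_iff_linearIndependent.2 huv

theorem so_three_eq_top_of_one_lt_finrank {S : LieSubalgebra K (so (Fin 3) K)}
    (hS : 1 < finrank K S) : S = ⊤ := by
  have : Nontrivial S := nontrivial_of_finrank_pos (zero_lt_one.trans hS)
  obtain ⟨x, hx⟩ := exists_ne (0 : S)
  obtain ⟨y, hxy⟩ := exists_linearIndependent_pair_of_one_lt_finrank hS hx
  let v : S →ₗ[K] Fin 3 → K := axialVector.toLinearMap ∘ₗ S.toSubmodule.subtype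
  have hv_inj : Function.Injective v := axialVector.injective.comp Subtype.val_injective
  have hv_lie : v ⁅x, y⁆ = v x ⨯₃ v y := axialVector_lie x.1 y.1
  have hv_pair : LinearIndependent K ![v x, v y] := by
    have hcomp : v ∘ ![x, y] = ![v x, v y] := by ext i; fin_cases i <;> rfl
    exact hcomp ▸ hxy.map_injOn v hv_inj.injOn
  have hbasis : LinearIndependent K ![x, y, ⁅x, y⁆] := by
    have hcomp : v ∘ ![x, y, ⁅x, y⁆] = ![v x, v y, v x ⨯₃ v y] := by
      rw [← hv_lie]
      ext i
      fin_cases i <;> rfl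
    exact .of_comp v (hcomp ▸ linearIndependent_cross hv_pair)
  have hle : 3 ≤ finrank K S := by simpa using hbasis.fintype_card_le_finrank
  rw [← LieSubalgebra.toSubmodule_inj]
  refine Submodule.eq_top_of_finrank_eq (le_antisymm (Submodule.finrank_le _) ?_)
  rwa [finrank_so_three]

theorem so_three_two_mul_finrank_lt_of_ne_top {S : LieSubalgebra K (so (Fin 3) K)} (hS : S ≠ ⊤) :
    2 * finrank K S < finrank K (so (Fin 3) K) := by
  have hle : finrank K S ≤ 1 := not_lt.1 (mt so_three_eq_top_of_one_lt_finrank hS)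
  rw [finrank_so_three]
  omega

end OrthogonalThree

/-- every 3-dimensional Lie subalgebra of `so₃(ℝ) × so₃(ℝ)` containing no
nonzero Lie ideal of `so₃(ℝ) × so₃(ℝ)` is carried by some Lie algebra automorphism onto the
diagonal `{(X, X) : X ∈ so₃(ℝ)}`. -/
theorem stmt_13 (h : LieSubalgebra ℝ (so3R × so3R))
    (hdim : Module.finrank ℝ h = 3)
    (hnoideal : ∀ I : LieIdeal ℝ (so3R × so3R),
      I.toSubmodule ≤ h.toSubmodule → I = ⊥) :
    ∃ φ : (so3R × so3R) ≃ₗ⁅ℝ⁆ (so3R × so3R),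
      Submodule.map φ.toLieHom.toLinearMap h.toSubmodule = hDiag := by
  exact stmt_13_general (fun _ ↦ so_three_two_mul_finrank_lt_of_ne_top) h
    (by rw [finrank_so_three, hdim]) hnoideal
end
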